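/- arXiv:1310.7636 — 2 statements merged into one kernel-verified Lean document; each statement's English description precedes it below -/
import Mathlib

section
/- Let H be a real Hilbert space, K ⊆ H weakly compact and convex, and f : K → H with f(K) ⊆ K. Suppose that for every sequence (xₙ) ⊆ K converging weakly to x ∈ K, the sequence (xₙ − f(xₙ)) converges in norm to x − f(x). Then f has a fixed point. -/
/-!
Put `g = id - f`, which is weak-to-norm sequentially continuous on `K`. A point `z ∈ K` with
`0 ≤ ⟪g z, f z - z⟫ = -‖g z‖²` is a fixed point, so the theorem is a variational inequality.

On a polytope with finitely many vertices in `K` such an inequality, tested at the vertices, is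
solvable for continuous `g` (`exists_variational`); this has the strength of Brouwer's theorem. It
is deduced from Scarf's combinatorial lemma (`Scarf.exists_colorful`), a parity argument of
Sperner type that uses finitely many linear orders instead of a triangulation, applied to finer and
finer grids in the simplex (`Scarf.exists_grid`, `Scarf.exists_mem_stdSimplex`).

Choose then recursively `x k ∈ K` in the convex hull of the points `f (x j)`, `j < k`, with
`0 ≤ ⟪g (x k), f (x j) - x k⟫` for all `j < k`. A subsequence converges weakly to some `z ∈ K`
(`WeaklyCompact.exists_subseq`), along which `g (x k)` converges in norm to `g z`. Letting `k → ∞`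
gives `0 ≤ ⟪g z, f (x j) - z⟫` for every `j`. Along the subsequence `f (x j) = x j - g (x j)`
converges weakly to `z - g z`, so `0 ≤ -‖g z‖²`. No separability of `H` and no metrizability of the
weak topology on `K` is needed.
-/

open Filter Topology RealInnerProductSpace

/-- Weak convergence of a sequence: tested against all continuous linear functionals. -/
def WeakConv {X : Type*} [NormedAddCommGroup X] [NormedSpace ℝ X] (u : ℕ → X) (x : X) : Prop :=
  ∀ φ : X →L[ℝ] ℝ, Filter.Tendsto (fun n => φ (u n)) Filter.atTop (nhds (φ x))

/-- A set is weakly compact: its copy in the weak space is compact. -/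
def WeaklyCompact {X : Type*} [NormedAddCommGroup X] [NormedSpace ℝ X] (S : Set X) : Prop :=
  IsCompact (_root_.toWeakSpaceCLM ℝ X '' S)

namespace Scarf

open Finset

/-! ### Scarf's combinatorial lemma -/

/-- A finite set `S` is primitive for the family of orders `r` if no point lies, in every one of
the orders, strictly above the minimum of `S`. -/
def Primitive {V ι L : Type*} [LinearOrder L] (r : ι → V → L) (S : Finset V) : Prop :=
  ∀ y, ∃ i, ∀ x ∈ S, r i y ≤ r i x

theorem Primitive.mono {V ι L : Type*} [LinearOrder L] {r : ι → V → L} {S Q : Finset V}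
    (hS : Primitive r S) (hQS : Q ⊆ S) : Primitive r Q := fun y =>
  (hS y).imp fun _ hi x hx => hi x (hQS hx)

/-- Replacement lemma: a primitive set `Q` with one element fewer than there are orders extends to
exactly two primitive sets of full size. Taking minima maps the indices onto `Q`, so exactly one
pair `i₁, i₂` of indices shares its minimum; an added point has to take over the minimum for one of
these two indices `k`, and it is then the `r k`-largest point above the minima in all other
orders. Hypothesis `hA` says that such points exist. -/
theorem card_rooms_eq_two {V ι L : Type*} [Fintype V] [DecidableEq V] [Fintype ι]
    [LinearOrder L] (r : ι → V → L) [DecidablePred (Primitive r)]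
    (hr : ∀ i, Function.Injective (r i)) (Q : Finset V) (hQ : Primitive r Q) (hne : Q.Nonempty)
    (hcard : #Q + 1 = Fintype.card ι)
    (hA : ∀ k, ∃ v, ∀ i, i ≠ k → ∃ q ∈ Q, r i q < r i v) :
    #{S : Finset V | (Primitive r S ∧ #S = Fintype.card ι) ∧ Q ⊆ S} = 2 := by
  classical
  choose m hmQ hm using fun i => Finset.exists_min_image Q (r i) hne
  have hsurj : ∀ y ∈ Q, ∃ i, m i = y := fun y hy => by
    obtain ⟨i, hi⟩ := hQ y
    exact ⟨i, hr i (le_antisymm (hm i y hy) (hi _ (hmQ i)))⟩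
  obtain ⟨i₁, -, i₂, -, h12, hm12⟩ := Finset.exists_ne_map_eq_of_card_lt_of_maps_to
    (s := (Finset.univ : Finset ι)) (t := Q) (by rw [Finset.card_univ]; omega)
    (f := m) (fun i _ => hmQ i)
  have hsurj' : ∀ k, k = i₁ ∨ k = i₂ → ∀ y ∈ Q, ∃ i, i ≠ k ∧ m i = y := by
    intro k hk y hy
    obtain ⟨i, rfl⟩ := hsurj y hy
    by_cases hik : i = k
    · subst hik
      rcases hk with rfl | rfl
      · exact ⟨i₂, h12.symm, hm12.symm⟩
      · exact ⟨i₁, h12, hm12⟩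
    · exact ⟨i, hik, rfl⟩
  have hmax : ∀ k, ∃ v, (∀ i, i ≠ k → r i (m i) < r i v) ∧
      ∀ y, (∀ i, i ≠ k → r i (m i) < r i y) → r k y ≤ r k v := by
    intro k
    obtain ⟨v₀, hv₀⟩ := hA k
    obtain ⟨v, hv, hvm⟩ := Finset.exists_max_image
      {v : V | ∀ i, i ≠ k → r i (m i) < r i v} (r k)
      ⟨v₀, by
        simp only [Finset.mem_filter, Finset.mem_univ, true_and]
        intro i hi
        obtain ⟨q, hq, hlt⟩ := hv₀ i hi
        exact (hm i q hq).trans_lt hlt⟩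
    simp only [Finset.mem_filter, Finset.mem_univ, true_and] at hv hvm
    exact ⟨v, hv, hvm⟩
  choose v hv hvmax using hmax
  have hnot : ∀ k, k = i₁ ∨ k = i₂ → v k ∉ Q := by
    intro k hk hmem
    obtain ⟨i, hik, hi⟩ := hsurj' k hk _ hmem
    have := hv k i hik
    rw [hi] at this
    exact lt_irrefl _ this
  have hprim : ∀ k, Primitive r (insert (v k) Q) := by
    intro k y
    by_cases hy : ∀ i, i ≠ k → r i (m i) < r i y
    · obtain ⟨i, hi⟩ := hQ y
      have hik : i = k := by
        by_contra hik
        exact absurd (hi _ (hmQ i)) (not_le.2 (hy i hik))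
      subst hik
      refine ⟨i, fun x hx => ?_⟩
      rcases Finset.mem_insert.1 hx with rfl | hx
      · exact hvmax i y hy
      · exact hi x hx
    · push Not at hy
      obtain ⟨i, hik, hi⟩ := hy
      refine ⟨i, fun x hx => ?_⟩
      rcases Finset.mem_insert.1 hx with rfl | hx
      · exact hi.trans (hv k i hik).le
      · exact hi.trans (hm i x hx)
  have hvne : v i₁ ≠ v i₂ := by
    intro h
    obtain ⟨i, hi⟩ := hQ (v i₁)
    have h1 := hi _ (hmQ i)
    by_cases hi1 : i = i₁
    · have := hv i₂ i (by rw [hi1]; exact h12)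
      rw [← h] at this
      exact absurd h1 (not_le.2 this)
    · exact absurd h1 (not_le.2 (hv i₁ i hi1))
  have hset : ({S : Finset V | (Primitive r S ∧ #S = Fintype.card ι) ∧ Q ⊆ S} : Finset (Finset V))
      = {insert (v i₁) Q, insert (v i₂) Q} := by
    ext S
    simp only [Finset.mem_filter, Finset.mem_univ, true_and, Finset.mem_insert,
      Finset.mem_singleton]
    constructor
    · rintro ⟨⟨hS, hSc⟩, hQS⟩
      obtain ⟨w, hwQ, rfl⟩ : ∃ w, w ∉ Q ∧ insert w Q = S :=
        Finset.exists_eq_insert_iff.2 ⟨hQS, by omega⟩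
      obtain ⟨k, hk⟩ := hS w
      have hkQ : ∀ x ∈ Q, r k w < r k x := fun x hx =>
        lt_of_le_of_ne (hk x (Finset.mem_insert_of_mem hx))
          (fun h => hwQ (by rw [hr k h]; exact hx))
      -- The indices whose minimum over the larger set is still attained in `Q`.
      let G : Finset ι := {i | r i (m i) < r i w}
      have hGk : G ⊆ Finset.univ.erase k := by
        intro i hi
        have hi' : r i (m i) < r i w := by simpa [G] using hi
        refine Finset.mem_erase.2 ⟨?_, Finset.mem_univ _⟩
        rintro rfl
        exact lt_asymm hi' (hkQ _ (hmQ i))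
      have hGs : Set.SurjOn m G Q := by
        intro q hq
        obtain ⟨i, hi⟩ := hS q
        have hmi : m i = q :=
          hr i (le_antisymm (hm i q hq) (hi _ (Finset.mem_insert_of_mem (hmQ i))))
        refine ⟨i, ?_, hmi⟩
        have : r i (m i) < r i w := by
          rw [hmi]
          refine lt_of_le_of_ne (hi w (Finset.mem_insert_self _ _)) (fun h => hwQ ?_)
          rw [← hr i h]; exact hq
        simpa [G] using this
      have hcG := Finset.card_le_card_of_surjOn m hGs
      have hck : #(Finset.univ.erase k) + 1 = Fintype.card ι := by
        rw [Finset.card_erase_add_one (Finset.mem_univ k), Finset.card_univ]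
      have hGeq : G = Finset.univ.erase k := Finset.eq_of_subset_of_card_le hGk (by omega)
      have hinj : Set.InjOn m G := Finset.injOn_of_surjOn_of_card_le m (fun i _ => hmQ i) hGs
        (by rw [hGeq]; omega)
      have hk12 : k = i₁ ∨ k = i₂ := by
        by_contra hcon
        push Not at hcon
        refine h12 (hinj ?_ ?_ hm12)
        · rw [hGeq]; simpa using hcon.1.symm
        · rw [hGeq]; simpa using hcon.2.symm
      have hAw : ∀ i, i ≠ k → r i (m i) < r i w := by
        intro i hi
        have : i ∈ G := by rw [hGeq]; simpa using hi
        simpa [G] using this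
      have hwv : w = v k := by
        refine hr k (le_antisymm (hvmax k w hAw) ?_)
        obtain ⟨i, hi⟩ := hS (v k)
        have hik : i = k := by
          by_contra hik
          exact absurd (hi _ (Finset.mem_insert_of_mem (hmQ i))) (not_le.2 (hv k i hik))
        rw [← hik] at hi ⊢
        exact hi w (Finset.mem_insert_self _ _)
      rcases hk12 with rfl | rfl
      · exact Or.inl (by rw [hwv])
      · exact Or.inr (by rw [hwv])
    · rintro (rfl | rfl)
      · exact ⟨⟨hprim _, by rw [Finset.card_insert_of_notMem (hnot _ (Or.inl rfl)), hcard]⟩,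
          Finset.subset_insert _ _⟩
      · exact ⟨⟨hprim _, by rw [Finset.card_insert_of_notMem (hnot _ (Or.inr rfl)), hcard]⟩,
          Finset.subset_insert _ _⟩
  rw [hset, Finset.card_pair]
  intro h
  have : v i₁ ∈ insert (v i₂) Q := h ▸ Finset.mem_insert_self _ _
  rcases Finset.mem_insert.1 this with hmem | hmem
  · exact hvne hmem
  · exact hnot _ (Or.inl rfl) hmem

/-- If a set of `card ι` points misses a colour, the ways of deleting one point so that exactly the
colours other than `i₀` remain number zero or two: in the latter case a single colour is repeated,
and either of its two points may be deleted. -/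
theorem even_card_doors {V ι : Type*} [Fintype V] [DecidableEq V] [Fintype ι] [DecidableEq ι]
    (c : V → ι) (i₀ : ι) (S : Finset V) (hS : #S = Fintype.card ι)
    (hc : S.image c ≠ Finset.univ) :
    Even #{Q : Finset V | (#Q + 1 = Fintype.card ι ∧ Q.image c = Finset.univ.erase i₀) ∧
      Q ⊆ S} := by
  rcases Finset.eq_empty_or_nonempty ({Q : Finset V | (#Q + 1 = Fintype.card ι ∧
    Q.image c = Finset.univ.erase i₀) ∧ Q ⊆ S} : Finset (Finset V)) with h | ⟨Q₀, hQ₀⟩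
  · rw [h]; simp
  simp only [Finset.mem_filter, Finset.mem_univ, true_and] at hQ₀
  obtain ⟨⟨hQc, hQi⟩, hQS⟩ := hQ₀
  have hinj : Set.InjOn c Q₀ := by
    rw [← Finset.card_image_iff, hQi]
    have := Finset.card_erase_add_one (Finset.mem_univ i₀)
    rw [Finset.card_univ] at this
    omega
  obtain ⟨x, hxQ, rfl⟩ : ∃ x, x ∉ Q₀ ∧ insert x Q₀ = S :=
    Finset.exists_eq_insert_iff.2 ⟨hQS, by omega⟩
  have hx0 : c x ≠ i₀ := by
    intro h
    apply hc
    rw [Finset.image_insert, hQi, h, Finset.insert_erase (Finset.mem_univ _)]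
  obtain ⟨x', hx'Q, hx'⟩ : ∃ x' ∈ Q₀, c x' = c x := by
    have : c x ∈ Q₀.image c := by rw [hQi]; simpa using hx0
    simpa using this
  have hxx' : x ≠ x' := fun h => hxQ (h ▸ hx'Q)
  have hset : ({Q : Finset V | (#Q + 1 = Fintype.card ι ∧
      Q.image c = Finset.univ.erase i₀) ∧ Q ⊆ insert x Q₀} : Finset (Finset V))
      = {Q₀, (insert x Q₀).erase x'} := by
    ext Q
    simp only [Finset.mem_filter, Finset.mem_univ, true_and, Finset.mem_insert,
      Finset.mem_singleton]
    constructor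
    · rintro ⟨⟨hQ1, hQ2⟩, hQ3⟩
      obtain ⟨z, hzQ, hzS⟩ : ∃ z, z ∉ Q ∧ insert z Q = insert x Q₀ :=
        Finset.exists_eq_insert_iff.2 ⟨hQ3, by omega⟩
      have hQe : Q = (insert x Q₀).erase z := by rw [← hzS, Finset.erase_insert hzQ]
      by_cases hzx : z = x
      · left; rw [hQe, hzx, Finset.erase_insert hxQ]
      · right
        have hzQ₀ : z ∈ Q₀ := by
          have : z ∈ insert x Q₀ := hzS ▸ Finset.mem_insert_self _ _
          exact (Finset.mem_insert.1 this).resolve_left hzx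
        have : c z ∈ Q.image c := by
          rw [hQ2, ← hQi]; exact Finset.mem_image_of_mem c hzQ₀
        obtain ⟨w, hwQ, hw⟩ := Finset.mem_image.1 this
        have hwz : w ≠ z := fun h => hzQ (h ▸ hwQ)
        rcases Finset.mem_insert.1 (hQ3 hwQ) with rfl | hwQ₀
        · have : z = x' := hinj hzQ₀ hx'Q (by rw [hx', hw])
          rw [hQe, this]
        · exact absurd (hinj hwQ₀ hzQ₀ hw) hwz
    · rintro (rfl | rfl)
      · exact ⟨⟨hQc, hQi⟩, hQS⟩
      · refine ⟨⟨?_, ?_⟩, Finset.erase_subset _ _⟩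
        · rw [Finset.card_erase_add_one (Finset.mem_insert_of_mem hx'Q), hS]
        · rw [← hQi]
          ext j
          simp only [Finset.mem_image, Finset.mem_erase, Finset.mem_insert]
          constructor
          · rintro ⟨w, ⟨-, rfl | hw⟩, rfl⟩
            · exact ⟨x', hx'Q, hx'⟩
            · exact ⟨w, hw, rfl⟩
          · rintro ⟨w, hw, rfl⟩
            by_cases h : w = x'
            · exact ⟨x, ⟨hxx', Or.inl rfl⟩, by rw [h, hx']⟩
            · exact ⟨w, ⟨h, Or.inr hw⟩, rfl⟩
  rw [hset, Finset.card_pair]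
  · exact even_two
  · intro h
    have : x' ∈ (insert x Q₀).erase x' := h ▸ hx'Q
    simp at this

/-- The boundary case of the replacement lemma: the slack points other than `inr i₀` extend to a
single primitive set of full size, by adding the `r i₀`-largest ordinary point. -/
theorem card_rooms_slack {T ι L : Type*} [Fintype T] [Nonempty T] [DecidableEq T] [Fintype ι]
    [DecidableEq ι] [LinearOrder L] (r : ι → T ⊕ ι → L) [DecidablePred (Primitive r)]
    (hr : ∀ i, Function.Injective (r i))
    (hlow : ∀ i x, r i (Sum.inr i) < r i (Sum.inl x))
    (hhigh : ∀ i j x, j ≠ i → r i (Sum.inl x) < r i (Sum.inr j)) (i₀ : ι) :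
    #{S : Finset (T ⊕ ι) | (Primitive r S ∧ #S = Fintype.card ι) ∧
      (Finset.univ.erase i₀).image Sum.inr ⊆ S} = 1 := by
  obtain ⟨t, -, ht⟩ := Finset.exists_max_image (Finset.univ : Finset T)
    (fun x => r i₀ (Sum.inl x)) Finset.univ_nonempty
  set Q : Finset (T ⊕ ι) := (Finset.univ.erase i₀).image Sum.inr with hQdef
  have hmemQ : ∀ j, j ≠ i₀ → (Sum.inr j : T ⊕ ι) ∈ Q := fun j hj => by simpa [hQdef] using hj
  have hQc : #Q + 1 = Fintype.card ι := by
    rw [hQdef, Finset.card_image_of_injective _ Sum.inr_injective,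
      Finset.card_erase_add_one (Finset.mem_univ _), Finset.card_univ]
  have hlow' : ∀ i j, r i (Sum.inr i) ≤ r i (Sum.inr j) := fun i j => by
    by_cases h : j = i
    · rw [h]
    · exact ((hlow i t).trans (hhigh i j t h)).le
  rw [Finset.card_eq_one]
  refine ⟨insert (Sum.inl t) Q, ?_⟩
  ext S
  simp only [Finset.mem_filter, Finset.mem_univ, true_and, Finset.mem_singleton]
  constructor
  · rintro ⟨⟨hS, hSc⟩, hQS⟩
    obtain ⟨w, hwQ, rfl⟩ : ∃ w, w ∉ Q ∧ insert w Q = S :=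
      Finset.exists_eq_insert_iff.2 ⟨hQS, by omega⟩
    have key : ∀ y : T, ∀ x ∈ insert w Q, r i₀ (Sum.inl y) ≤ r i₀ x := by
      intro y
      obtain ⟨i, hi⟩ := hS (Sum.inl y)
      have : i = i₀ := by
        by_contra h
        exact absurd (hi _ (Finset.mem_insert_of_mem (hmemQ i h))) (not_le.2 (hlow i y))
      rwa [this] at hi
    rcases w with w | j
    · have h1 := key t _ (Finset.mem_insert_self _ _)
      have : (Sum.inl w : T ⊕ ι) = Sum.inl t := hr i₀ (le_antisymm (ht w (Finset.mem_univ _)) h1)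
      rw [this]
    · have hj : j = i₀ := by
        by_contra h
        exact hwQ (hmemQ j h)
      subst hj
      exact absurd (key t _ (Finset.mem_insert_self _ _)) (not_le.2 (hlow _ t))
  · rintro rfl
    refine ⟨⟨?_, ?_⟩, Finset.subset_insert _ _⟩
    · rintro (y | j)
      · refine ⟨i₀, fun x hx => ?_⟩
        rcases Finset.mem_insert.1 hx with rfl | hx
        · exact ht y (Finset.mem_univ _)
        · obtain ⟨j, hj, rfl⟩ := Finset.mem_image.1 hx
          exact (hhigh i₀ j y (Finset.mem_erase.1 hj).1).le
      · refine ⟨j, fun x _ => ?_⟩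
        rcases x with x | k
        · exact (hlow j x).le
        · exact hlow' j k
    · rw [Finset.card_insert_of_notMem (by simp [hQdef]), hQc]

/-- Scarf's lemma. The points are those of `T` together with one slack point `inr i` of colour `i`
for each order, which is lowest in the order `r i` and above `T` in all the others. Some primitive
set carries all colours. -/
theorem exists_colorful {T ι L : Type*} [Fintype T] [Nonempty T] [Fintype ι] [Nonempty ι]
    [DecidableEq ι] [LinearOrder L] (r : ι → T ⊕ ι → L)
    (hr : ∀ i, Function.Injective (r i))
    (hlow : ∀ i x, r i (Sum.inr i) < r i (Sum.inl x))
    (hhigh : ∀ i j x, j ≠ i → r i (Sum.inl x) < r i (Sum.inr j)) (c : T → ι) :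
    ∃ S : Finset (T ⊕ ι), Primitive r S ∧ S.image (Sum.elim c id) = Finset.univ := by
  classical
  by_contra hcon
  push Not at hcon
  obtain ⟨i₀⟩ := ‹Nonempty ι›
  -- Incidences between the full-size primitive sets `R` and the sets `D` carrying exactly the
  -- colours other than `i₀` are counted modulo 2; the only odd contribution is that of `Q₀`.
  let R : Finset (Finset (T ⊕ ι)) := {S | Primitive r S ∧ #S = Fintype.card ι}
  let D : Finset (Finset (T ⊕ ι)) := {Q | #Q + 1 = Fintype.card ι ∧
    Q.image (Sum.elim c id) = Finset.univ.erase i₀}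
  let Q₀ : Finset (T ⊕ ι) := (Finset.univ.erase i₀).image Sum.inr
  have hdc := Finset.sum_card_bipartiteAbove_eq_sum_card_bipartiteBelow (s := D) (t := R)
    (fun Q S => Q ⊆ S)
  have hright : Even (∑ S ∈ R, #(D.bipartiteBelow (fun Q S => Q ⊆ S) S)) := by
    refine Finset.even_sum _ fun S hS => ?_
    simp only [R, Finset.mem_filter, Finset.mem_univ, true_and] at hS
    have := even_card_doors (Sum.elim c id) i₀ S hS.2 (hcon S hS.1)
    simpa only [Finset.bipartiteBelow, D, Finset.filter_filter] using this
  have hQ₀D : Q₀ ∈ D := by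
    simp only [D, Q₀, Finset.mem_filter, Finset.mem_univ, true_and]
    constructor
    · rw [Finset.card_image_of_injective _ Sum.inr_injective,
        Finset.card_erase_add_one (Finset.mem_univ _), Finset.card_univ]
    · rw [Finset.image_image]
      ext j; simp
  have hone : #(R.bipartiteAbove (fun Q S => Q ⊆ S) Q₀) = 1 := by
    have := card_rooms_slack r hr hlow hhigh i₀
    simpa only [Finset.bipartiteAbove, R, Finset.filter_filter] using this
  have heven : ∀ Q ∈ D.erase Q₀, Even #(R.bipartiteAbove (fun Q S => Q ⊆ S) Q) := by
    intro Q hQ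
    obtain ⟨hne, hQD⟩ := Finset.mem_erase.1 hQ
    simp only [D, Finset.mem_filter, Finset.mem_univ, true_and] at hQD
    simp only [Finset.bipartiteAbove, R, Finset.filter_filter]
    by_cases hP : Primitive r Q
    · -- A door made of slack points only is `Q₀`, so `Q` has an ordinary point `t`.
      obtain ⟨t, ht⟩ : ∃ t, Sum.inl t ∈ Q := by
        by_contra hno
        push Not at hno
        apply hne
        ext y
        rcases y with t | j
        · simp [Q₀, hno t]
        · have h1 : (Sum.inr j : T ⊕ ι) ∈ Q ↔ j ∈ Q.image (Sum.elim c id) := by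
            simp only [Finset.mem_image]
            constructor
            · exact fun h => ⟨_, h, rfl⟩
            · rintro ⟨x | k, hx, hxj⟩
              · exact absurd hx (hno x)
              · rw [← hxj]; exact hx
          rw [h1, hQD.2]
          simp [Q₀]
      rw [card_rooms_eq_two r hr Q hP ⟨_, ht⟩ hQD.1]
      · exact even_two
      · exact fun k => ⟨Sum.inr k, fun i hi => ⟨_, ht, hhigh i k t hi.symm⟩⟩
    · rw [Finset.filter_false_of_mem]
      · simp
      · rintro S - ⟨⟨hS, -⟩, hQS⟩
        exact hP (hS.mono hQS)
  rw [← Finset.add_sum_erase D _ hQ₀D, hone] at hdc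
  have h2 := Finset.even_sum _ heven
  rw [← hdc] at hright
  rw [Nat.even_add] at hright
  exact absurd (hright.2 h2) (by decide)

end Scarf

namespace Scarf

/-! ### From grids to the simplex -/

/-- Grid form of Brouwer's theorem. The grid points `a` with `∑ a i = N` are ordered in direction
`i` by the `i`-th coordinate, ties being broken by a fixed enumeration. If `C` is the set of
colours whose slack point is absent from a colourful primitive set, the minima `m i` over the
grid points of that set satisfy `N < ∑ i ∈ C, (m i + 1)`, since otherwise a grid point would
exceed all of them. Hence each of its grid points is within `card ι` of `m` in every coordinate,
with `m i = 0` for `i ∉ C`. -/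
theorem exists_grid {ι : Type*} [Fintype ι] [Nonempty ι] (N : ℕ) (c : (ι → ℕ) → ι) :
    ∃ a : ι → ℕ, ∑ i, a i = N ∧ ∀ i, a i < Fintype.card ι ∨
      ∃ b : ι → ℕ, ∑ j, b j = N ∧ c b = i ∧
        ∀ j, a j ≤ b j + Fintype.card ι ∧ b j ≤ a j + Fintype.card ι := by
  classical
  let T := {a : ι → ℕ // a ∈ Finset.piAntidiag (Finset.univ : Finset ι) N}
  have hTsum : ∀ a : T, ∑ i, a.1 i = N := fun a => (Finset.mem_piAntidiag.1 a.2).1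
  have hTmk : ∀ a : ι → ℕ, ∑ i, a i = N → a ∈ Finset.piAntidiag (Finset.univ : Finset ι) N :=
    fun a ha => Finset.mem_piAntidiag.2 ⟨ha, fun i _ => Finset.mem_univ i⟩
  have hTle : ∀ (a : T) i, a.1 i ≤ N := fun a i => by
    refine (?_ : a.1 i ≤ ∑ j, a.1 j).trans (hTsum a).le
    exact Finset.single_le_sum (f := a.1) (fun _ _ => Nat.zero_le _) (Finset.mem_univ i)
  obtain ⟨i₀⟩ := id ‹Nonempty ι›
  have : Nonempty T := ⟨⟨Pi.single i₀ N, hTmk _ (by simp)⟩⟩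
  let e := Fintype.equivFin T
  let e' := Fintype.equivFin ι
  let r : ι → T ⊕ ι → ℕ ×ₗ ℕ := fun i v => Sum.elim
    (fun a : T => toLex (a.1 i + 1, (e a : ℕ)))
    (fun j => if j = i then toLex (0, 0) else toLex (N + 2, (e' j : ℕ))) v
  have hr : ∀ i, Function.Injective (r i) := by
    rintro i (a | j) (b | k) h
    · simp only [r, Sum.elim_inl, EmbeddingLike.apply_eq_iff_eq, Prod.mk.injEq] at h
      rw [e.injective (Fin.ext h.2)]
    · have := hTle a i
      simp only [r, Sum.elim_inl, Sum.elim_inr] at h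
      split_ifs at h <;> simp only [EmbeddingLike.apply_eq_iff_eq, Prod.mk.injEq] at h <;> omega
    · have := hTle b i
      simp only [r, Sum.elim_inl, Sum.elim_inr] at h
      split_ifs at h <;> simp only [EmbeddingLike.apply_eq_iff_eq, Prod.mk.injEq] at h <;> omega
    · simp only [r, Sum.elim_inr] at h
      split_ifs at h with h1 h2 h2
      · rw [h1, h2]
      · simp at h
      · simp at h
      · simp only [EmbeddingLike.apply_eq_iff_eq, Prod.mk.injEq, true_and] at h
        rw [e'.injective (Fin.ext h)]
  have hlow : ∀ i x, r i (Sum.inr i) < r i (Sum.inl x) := by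
    intro i x
    simp [r, Prod.Lex.toLex_lt_toLex]
  have hhigh : ∀ i j x, j ≠ i → r i (Sum.inl x) < r i (Sum.inr j) := by
    intro i j x hj
    have := hTle x i
    simp only [r, Sum.elim_inl, Sum.elim_inr, if_neg hj, Prod.Lex.toLex_lt_toLex]
    left; omega
  have hcoord : ∀ i (a b : T), r i (Sum.inl a) ≤ r i (Sum.inl b) → a.1 i ≤ b.1 i := by
    intro i a b h
    simp only [r, Sum.elim_inl, Prod.Lex.toLex_le_toLex] at h
    omega
  obtain ⟨S, hS, hcS⟩ := exists_colorful r hr hlow hhigh (fun a : T => c a.1)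
  have hcol : ∀ i, Sum.inr i ∉ S → ∃ x : T, Sum.inl x ∈ S ∧ c x.1 = i := by
    intro i hi
    have : i ∈ S.image (Sum.elim (fun a : T => c a.1) id) := by rw [hcS]; exact Finset.mem_univ _
    obtain ⟨x | j, hx, hxi⟩ := Finset.mem_image.1 this
    · exact ⟨x, hx, hxi⟩
    · exact absurd (hxi ▸ hx) hi
  have hdom : ∀ y : T, ∃ i, Sum.inr i ∉ S ∧ ∀ x : T, Sum.inl x ∈ S → y.1 i ≤ x.1 i := by
    intro y
    obtain ⟨i, hi⟩ := hS (Sum.inl y)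
    exact ⟨i, fun h => absurd (hi _ h) (not_le.2 (hlow i y)), fun x hx => hcoord i y x (hi _ hx)⟩
  have hmin : ∀ i, ∃ m : ℕ, (∀ x : T, Sum.inl x ∈ S → m ≤ x.1 i) ∧ (Sum.inr i ∈ S → m = 0) ∧
      (Sum.inr i ∉ S → ∃ x : T, Sum.inl x ∈ S ∧ x.1 i = m) := by
    intro i
    by_cases hi : Sum.inr i ∈ S
    · exact ⟨0, fun _ _ => Nat.zero_le _, fun _ => rfl, fun h => absurd hi h⟩
    · obtain ⟨x₀, hx₀, -⟩ := hcol i hi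
      obtain ⟨x, hx, hxm⟩ := Finset.exists_min_image {x : T | Sum.inl x ∈ S} (fun x => x.1 i)
        ⟨x₀, by simpa using hx₀⟩
      simp only [Finset.mem_filter, Finset.mem_univ, true_and] at hx hxm
      exact ⟨x.1 i, hxm, fun h => absurd h hi, fun _ => ⟨x, hx, rfl⟩⟩
  choose m hm hm0 hmx using hmin
  obtain ⟨i₁, hi₁, -⟩ := hdom (Classical.arbitrary T)
  have hlt : N < ∑ i, (m i + if Sum.inr i ∈ S then 0 else 1) := by
    by_contra hle
    push Not at hle
    set w : ι → ℕ := fun i => m i + if Sum.inr i ∈ S then 0 else 1 with hw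
    -- A grid point beating every minimum; the surplus is put on the coordinate `i₁`.
    obtain ⟨i, hi, hiy⟩ := hdom ⟨w + Pi.single i₁ (N - ∑ i, w i), hTmk _ (by
      simp only [Pi.add_apply, Finset.sum_add_distrib, Finset.sum_pi_single', Finset.mem_univ,
        if_true]
      exact Nat.add_sub_cancel' hle)⟩
    obtain ⟨x, hx, hxi⟩ := hmx i hi
    have := hiy x hx
    simp only [Pi.add_apply, hw, if_neg hi] at this
    omega
  have hub : ∀ x : T, Sum.inl x ∈ S → ∀ j, x.1 j < m j + Fintype.card ι := by
    intro x hx j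
    have h1 : ∑ i, (m i + if Sum.inr i ∈ S then 0 else 1) ≤ ∑ i, m i + Fintype.card ι := by
      rw [Finset.sum_add_distrib]
      gcongr
      calc ∑ i, (if Sum.inr i ∈ S then 0 else 1) ≤ ∑ _i : ι, 1 :=
            Finset.sum_le_sum fun i _ => by split_ifs <;> simp
        _ = Fintype.card ι := by simp
    have h2 := hTsum x
    rw [← Finset.add_sum_erase _ _ (Finset.mem_univ j)] at h2
    have h3 : ∑ i ∈ Finset.univ.erase j, m i ≤ ∑ i ∈ Finset.univ.erase j, x.1 i :=
      Finset.sum_le_sum fun i _ => hm i x hx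
    rw [← Finset.add_sum_erase _ m (Finset.mem_univ j)] at h1
    omega
  obtain ⟨a, ha, -⟩ := hcol i₁ hi₁
  refine ⟨a.1, hTsum a, fun i => ?_⟩
  by_cases hi : Sum.inr i ∈ S
  · left
    have := hub a ha i
    rwa [hm0 i hi, zero_add] at this
  · right
    obtain ⟨b, hb, hbi⟩ := hcol i hi
    refine ⟨b.1, hTsum b, hbi, fun j => ?_⟩
    have h1 := hub a ha j
    have h2 := hub b hb j
    have h3 := hm j a ha
    have h4 := hm j b hb
    omega

/-- Limit of `exists_grid` along finer and finer grids, a grid point being coloured by an index `i`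
with `0 ≤ p i`. Applied to `p i t = F t i - t i` it yields Brouwer's theorem for a self-map `F` of
the simplex. -/
theorem exists_mem_stdSimplex {ι : Type*} [Fintype ι] [Nonempty ι] (p : ι → (ι → ℝ) → ℝ)
    (hp : ∀ i, ContinuousOn (p i) (stdSimplex ℝ ι))
    (h : ∀ t ∈ stdSimplex ℝ ι, ∃ i, 0 ≤ p i t) :
    ∃ t ∈ stdSimplex ℝ ι, ∀ i, t i ≠ 0 → 0 ≤ p i t := by
  have hstep : ∀ N : ℕ, ∃ t ∈ stdSimplex ℝ ι, ∀ i, t i < Fintype.card ι / ((N : ℝ) + 1) ∨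
      ∃ s ∈ stdSimplex ℝ ι, 0 ≤ p i s ∧ dist s t ≤ Fintype.card ι / ((N : ℝ) + 1) := by
    intro N
    have hN : (0 : ℝ) < (N : ℝ) + 1 := by positivity
    have hq : ∀ a : ι → ℕ, ∑ i, a i = N + 1 →
        (fun i => (a i : ℝ) / ((N : ℝ) + 1)) ∈ stdSimplex ℝ ι := by
      intro a ha
      refine ⟨fun i => by positivity, ?_⟩
      rw [← Finset.sum_div, ← Nat.cast_sum, ha]
      push_cast
      exact div_self hN.ne'
    have hc : ∀ a : ι → ℕ, ∃ i, ∑ j, a j = N + 1 →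
        0 ≤ p i (fun j => (a j : ℝ) / ((N : ℝ) + 1)) := by
      intro a
      by_cases ha : ∑ j, a j = N + 1
      · obtain ⟨i, hi⟩ := h _ (hq a ha)
        exact ⟨i, fun _ => hi⟩
      · exact ⟨Classical.arbitrary ι, fun h => absurd h ha⟩
    choose c hc using hc
    obtain ⟨a, ha, hai⟩ := exists_grid (N + 1) c
    refine ⟨_, hq a ha, fun i => ?_⟩
    rcases hai i with hlt | ⟨b, hb, rfl, hab⟩
    · left
      have : (a i : ℝ) < Fintype.card ι := by exact_mod_cast hlt
      gcongr
    · right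
      refine ⟨_, hq b hb, hc b hb, ?_⟩
      rw [dist_pi_le_iff (by positivity)]
      intro j
      have h1 : (a j : ℝ) ≤ b j + Fintype.card ι := by exact_mod_cast (hab j).1
      have h2 : (b j : ℝ) ≤ a j + Fintype.card ι := by exact_mod_cast (hab j).2
      rw [Real.dist_eq, ← sub_div, abs_div, abs_of_pos hN]
      gcongr
      rw [abs_le]
      constructor <;> linarith
  choose t ht hti using hstep
  obtain ⟨z, hz, φ, hφ, hlim⟩ := (isCompact_stdSimplex ℝ ι).tendsto_subseq ht
  refine ⟨z, hz, fun i hi => ?_⟩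
  by_contra! hneg
  have hzi : 0 < z i := lt_of_le_of_ne (hz.1 i) (Ne.symm hi)
  obtain ⟨δ, hδ, hδp⟩ := Metric.mem_nhdsWithin_iff.1
    ((hp i z hz).eventually (gt_mem_nhds hneg))
  have hε : 0 < min (δ / 2) (z i / 2) := by positivity
  have hd : Tendsto (fun N : ℕ => (Fintype.card ι : ℝ) / ((φ N : ℝ) + 1)) atTop (𝓝 0) := by
    have h1 := ((tendsto_one_div_add_atTop_nhds_zero_nat (𝕜 := ℝ)).const_mul
      (Fintype.card ι : ℝ)).comp hφ.tendsto_atTop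
    rw [mul_zero] at h1
    exact h1.congr fun N => mul_one_div _ _
  obtain ⟨N, h1, h2⟩ :=
    ((hd.eventually (gt_mem_nhds hε)).and (Metric.tendsto_nhds.1 hlim _ hε)).exists
  simp only [Function.comp_apply] at h2
  obtain ⟨h1a, h1b⟩ := lt_min_iff.1 h1
  obtain ⟨h2a, h2b⟩ := lt_min_iff.1 h2
  rcases hti (φ N) i with h3 | ⟨s, hs, hps, hst⟩
  · have h4 := (dist_le_pi_dist (t (φ N)) z i).trans_lt h2b
    rw [Real.dist_eq, abs_lt] at h4
    linarith [h4.1]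
  · have : dist s z < δ := by
      calc dist s z ≤ dist s (t (φ N)) + dist (t (φ N)) z := dist_triangle _ _ _
        _ < δ := by linarith
    exact absurd hps (not_le.2 (hδp ⟨Metric.mem_ball.2 this, hs⟩))

end Scarf

/-! ### Variational inequalities and weak compactness in Hilbert space -/

/-- Variational inequality on a polytope, tested at the vertices. In barycentric coordinates `t`,
with `h j = ⟪g x, y j - x⟫` and negative parts `n j`, a Nash-type argument provides `t` with
`t j * ∑ n ≤ n j` for all `j`; as `∑ t j * h j = 0`, this forces `∑ n = 0`. -/
theorem exists_variational {H ι : Type*} [NormedAddCommGroup H] [InnerProductSpace ℝ H]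
    [Fintype ι] [Nonempty ι] (y : ι → H) (g : H → H)
    (hg : ContinuousOn g (convexHull ℝ (Set.range y))) :
    ∃ x ∈ convexHull ℝ (Set.range y), ∀ j, 0 ≤ ⟪g x, y j - x⟫ := by
  let X : (ι → ℝ) → H := fun t => ∑ j, t j • y j
  have hXc : Continuous X := by fun_prop
  have hXm : Set.MapsTo X (stdSimplex ℝ ι) (convexHull ℝ (Set.range y)) := fun t ht =>
    (convex_convexHull ℝ _).sum_mem (fun i _ => ht.1 i) ht.2
      (fun i _ => subset_convexHull ℝ _ (Set.mem_range_self i))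
  let h : ι → (ι → ℝ) → ℝ := fun j t => ⟪g (X t), y j - X t⟫
  have hgX : ContinuousOn (fun t => g (X t)) (stdSimplex ℝ ι) := hg.comp hXc.continuousOn hXm
  have hh : ∀ j, ContinuousOn (h j) (stdSimplex ℝ ι) := fun j =>
    hgX.inner (continuousOn_const.sub hXc.continuousOn)
  let n : ι → (ι → ℝ) → ℝ := fun j t => max 0 (-h j t)
  have hn : ∀ j, ContinuousOn (n j) (stdSimplex ℝ ι) := fun j =>
    continuousOn_const.sup (hh j).neg
  have hn0 : ∀ j t, 0 ≤ n j t := fun j t => le_max_left _ _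
  obtain ⟨t, ht, hti⟩ := Scarf.exists_mem_stdSimplex (fun i t => n i t - t i * ∑ j, n j t)
    (fun i => (hn i).sub ((continuous_apply i).continuousOn.mul
      (continuousOn_finsetSum _ fun j _ => hn j)))
    (by
      intro t ht
      by_contra! hneg
      have := Finset.sum_lt_sum_of_nonempty Finset.univ_nonempty (fun i _ => hneg i)
      rw [Finset.sum_sub_distrib, ← Finset.sum_mul, ht.2] at this
      simp at this)
  refine ⟨X t, hXm ht, ?_⟩
  -- The point `X t` is the barycentre of the vertices with weights `t`.
  have hsum : ∑ j, t j * h j t = 0 := by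
    have h1 : ∑ j, t j * h j t = ⟪g (X t), ∑ j, t j • (y j - X t)⟫ := by
      simp only [inner_sum, inner_smul_right, h]
    rw [h1]
    simp only [smul_sub, Finset.sum_sub_distrib, ← Finset.sum_smul, ht.2, one_smul]
    simp [X]
  have hS : ∑ j, n j t = 0 := by
    by_contra hne
    have hpos : 0 < ∑ j, n j t :=
      lt_of_le_of_ne (Finset.sum_nonneg fun j _ => hn0 j t) (Ne.symm hne)
    have hneg : ∀ i, 0 < t i → h i t < 0 := by
      intro i hi
      have h1 : t i * ∑ j, n j t ≤ n i t := by linarith [hti i hi.ne']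
      have h2 : 0 < n i t := (mul_pos hi hpos).trans_le h1
      rcases lt_max_iff.1 h2 with h3 | h3 <;> linarith
    obtain ⟨i, -, hi⟩ : ∃ i ∈ Finset.univ, 0 < t i :=
      Finset.exists_lt_of_sum_lt (f := fun _ => (0 : ℝ)) (by rw [ht.2]; simp)
    have : ∑ j, t j * h j t < ∑ _j : ι, (0 : ℝ) := by
      refine Finset.sum_lt_sum (fun j _ => ?_)
        ⟨i, Finset.mem_univ _, mul_neg_of_pos_of_neg hi (hneg i hi)⟩
      rcases (ht.1 j).eq_or_lt with h0 | h0
      · rw [← h0, zero_mul]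
      · exact (mul_neg_of_pos_of_neg h0 (hneg j h0)).le
    rw [hsum] at this
    simp at this
  intro j
  have h1 : n j t = 0 := (Finset.sum_eq_zero_iff_of_nonneg (fun j _ => hn0 j t)).1 hS j
    (Finset.mem_univ _)
  have h2 : -h j t ≤ n j t := le_max_right _ _
  change 0 ≤ h j t
  linarith

theorem WeaklyCompact.exists_norm_le {H : Type*} [NormedAddCommGroup H] [InnerProductSpace ℝ H]
    [CompleteSpace H] {K : Set H} (hK : WeaklyCompact K) : ∃ R, ∀ x ∈ K, ‖x‖ ≤ R := by
  obtain ⟨R, hR⟩ := banach_steinhaus (g := fun x : K => innerSL ℝ (x : H)) (by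
    intro v
    have hc : Continuous (fun w : WeakSpace ℝ H => innerSL ℝ v ((toWeakSpace ℝ H).symm w)) :=
      WeakBilin.eval_continuous (topDualPairing ℝ H).flip (innerSL ℝ v)
    obtain ⟨C, hC⟩ := (hK.image hc).isBounded.exists_norm_le
    refine ⟨C, fun x => ?_⟩
    have := hC _ ⟨_, ⟨x, x.2, rfl⟩, rfl⟩
    rw [innerSL_apply_apply, real_inner_comm]
    exact this)
  exact ⟨R, fun x hx => by simpa using hR ⟨x, hx⟩⟩

/-- Weak sequential compactness, from sequential Banach–Alaoglu in the dual of the separable closed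
span of the sequence. -/
theorem WeaklyCompact.exists_subseq {H : Type*} [NormedAddCommGroup H] [InnerProductSpace ℝ H]
    [CompleteSpace H] {K : Set H} (hK : WeaklyCompact K) (x : ℕ → H) (hx : ∀ n, x n ∈ K) :
    ∃ z ∈ K, ∃ φ : ℕ → ℕ, StrictMono φ ∧ WeakConv (fun n => x (φ n)) z := by
  obtain ⟨R, hR⟩ := hK.exists_norm_le
  let M : Submodule ℝ H := (Submodule.span ℝ (Set.range x)).topologicalClosure
  have hMc : IsClosed (M : Set H) := Submodule.isClosed_topologicalClosure _
  have : CompleteSpace M := hMc.completeSpace_coe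
  have : TopologicalSpace.SeparableSpace M :=
    ((Set.countable_range x).isSeparable.span (R := ℝ)).closure.separableSpace
  have hxM : ∀ n, x n ∈ M := fun n =>
    Submodule.le_topologicalClosure _ (Submodule.subset_span (Set.mem_range_self n))
  let D : ℕ → WeakDual ℝ M := fun n =>
    StrongDual.toWeakDual (InnerProductSpace.toDual ℝ M ⟨x n, hxM n⟩)
  obtain ⟨ψ, -, φ, hφ, hlim⟩ := WeakDual.isSeqCompact_closedBall ℝ M 0 R (x := D) (by
    intro n
    have : ‖InnerProductSpace.toDual ℝ M ⟨x n, hxM n⟩‖ ≤ R := by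
      rw [LinearIsometryEquiv.norm_map]
      exact hR _ (hx n)
    simpa [D] using this)
  let z : M := (InnerProductSpace.toDual ℝ M).symm (WeakDual.toStrongDual ψ)
  have hw : WeakConv (fun n => x (φ n)) (z : H) := by
    intro l
    let v : M := (InnerProductSpace.toDual ℝ M).symm (l.comp M.subtypeL)
    have hv : ∀ w : M, l w = ⟪w, v⟫ := by
      intro w
      rw [real_inner_comm, InnerProductSpace.toDual_symm_apply]
      rfl
    have h1 : Tendsto (fun n => D (φ n) v) atTop (𝓝 (ψ v)) :=
      ((WeakDual.eval_continuous v).tendsto ψ).comp hlim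
    have h2 : ψ v = l z := by
      rw [hv, InnerProductSpace.toDual_symm_apply]
      rfl
    rw [← h2]
    refine h1.congr fun n => ?_
    exact (hv ⟨x (φ n), hxM _⟩).symm
  refine ⟨z, ?_, φ, hφ, hw⟩
  have ht : Tendsto (fun n => toWeakSpaceCLM ℝ H (x (φ n))) atTop
      (𝓝 (toWeakSpaceCLM ℝ H (z : H))) := by
    have hinj : Function.Injective (topDualPairing ℝ H).flip := fun a b hab =>
      ext_inner_left ℝ fun v => LinearMap.congr_fun hab (innerSL ℝ v)
    exact (WeakBilin.tendsto_iff_forall_eval_tendsto (topDualPairing ℝ H).flip hinj).2 hw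
  obtain ⟨k, hk, hkz⟩ := hK.isClosed.mem_of_tendsto ht
    (Eventually.of_forall fun n => Set.mem_image_of_mem _ (hx (φ n)))
  exact (toWeakSpaceCLM_bijective (𝕜 := ℝ) (E := H)).injective hkz ▸ hk

theorem stmt9 {H : Type*} [NormedAddCommGroup H] [InnerProductSpace ℝ H] [CompleteSpace H]
    (K : Set H) (hne : K.Nonempty) (f : H → H)
    (hK : WeaklyCompact K) (hconv : Convex ℝ K) (hfK : f '' K ⊆ K)
    (hseq : ∀ (u : ℕ → H) (x : H), (∀ n, u n ∈ K) → x ∈ K → WeakConv u x →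
      Filter.Tendsto (fun n => u n - f (u n)) Filter.atTop (nhds (x - f x))) :
    ∃ x ∈ K, f x = x := by
  classical
  obtain ⟨R, hR⟩ := hK.exists_norm_le
  let g : H → H := fun x => x - f x
  have hg : ContinuousOn g K := by
    rw [continuousOn_iff_continuous_domRestrict, continuous_iff_seqContinuous]
    intro u a hu
    refine hseq (fun n => u n) a (fun n => (u n).2) a.2 fun l => ?_
    exact ((l.continuous.comp continuous_subtype_val).tendsto a).comp hu
  -- Each new point solves the variational inequality against the images of all previous points.
  obtain ⟨x, hxK, hx⟩ := exists_seq_of_forall_finset_exists (fun x => x ∈ K)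
    (fun x z => 0 ≤ ⟪g z, f x - z⟫) (by
      intro s hs
      rcases s.eq_empty_or_nonempty with rfl | hsne
      · obtain ⟨x₀, hx₀⟩ := hne
        exact ⟨x₀, hx₀, by simp⟩
      · have : Nonempty s := hsne.to_subtype
        have hsub : convexHull ℝ (Set.range fun x : s => f x) ⊆ K :=
          convexHull_min (by
            rintro _ ⟨x, rfl⟩
            exact hfK ⟨x, hs x x.2, rfl⟩) hconv
        obtain ⟨z, hz, hzs⟩ := exists_variational (fun x : s => f x) g (hg.mono hsub)
        exact ⟨z, hsub hz, fun x hx => hzs ⟨x, hx⟩⟩)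
  obtain ⟨z, hz, φ, hφ, hw⟩ := hK.exists_subseq x hxK
  have hgl : Tendsto (fun n => g (x (φ n))) atTop (𝓝 (g z)) :=
    hseq _ z (fun n => hxK _) hz hw
  have hwi : ∀ v : H, Tendsto (fun n => ⟪v, x (φ n)⟫) atTop (𝓝 ⟪v, z⟫) := fun v =>
    hw (innerSL ℝ v)
  have hfix : ∀ j, 0 ≤ ⟪g z, f (x j) - z⟫ := by
    intro j
    have h1 : Tendsto (fun n => ⟪g (x (φ n)) - g z, f (x j) - x (φ n)⟫) atTop (𝓝 0) := by
      have h2 : Tendsto (fun n => ‖g (x (φ n)) - g z‖ * (‖f (x j)‖ + R)) atTop (𝓝 0) := by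
        simpa using (tendsto_iff_norm_sub_tendsto_zero.1 hgl).mul_const (‖f (x j)‖ + R)
      refine squeeze_zero_norm (fun n => ?_) h2
      refine (norm_inner_le_norm _ _).trans ?_
      gcongr
      exact (norm_sub_le _ _).trans (by gcongr; exact hR _ (hxK _))
    have h3 : Tendsto (fun n => ⟪g z, f (x j) - x (φ n)⟫) atTop (𝓝 ⟪g z, f (x j) - z⟫) := by
      simp only [inner_sub_right]
      exact tendsto_const_nhds.sub (hwi _)
    have h4 := h1.add h3
    rw [zero_add] at h4
    refine ge_of_tendsto h4 ?_
    filter_upwards [eventually_gt_atTop j] with n hn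
    have := hx j (φ n) (hn.trans_le (hφ.id_le n))
    rw [← inner_add_left, sub_add_cancel]
    exact this
  -- Since `f = id - g`, also `f (x (φ n))` converges weakly to `z - g z`.
  have hlim : Tendsto (fun n => ⟪g z, f (x (φ n)) - z⟫) atTop (𝓝 (-⟪g z, g z⟫)) := by
    have h1 : Tendsto (fun n => ⟪g z, g (x (φ n))⟫) atTop (𝓝 ⟪g z, g z⟫) :=
      tendsto_const_nhds.inner hgl
    have h2 := ((hwi (g z)).sub h1).sub (tendsto_const_nhds (x := ⟪g z, z⟫))
    have h3 : ⟪g z, z⟫ - ⟪g z, g z⟫ - ⟪g z, z⟫ = -⟪g z, g z⟫ := by ring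
    rw [h3] at h2
    refine h2.congr fun n => ?_
    rw [← inner_sub_right, ← inner_sub_right]
    congr 2
    simp only [g]
    abel
  have h0 : 0 ≤ -⟪g z, g z⟫ := ge_of_tendsto hlim (Eventually.of_forall fun n => hfix _)
  have hgz : g z = 0 := by
    rw [real_inner_self_eq_norm_sq] at h0
    exact norm_eq_zero.1 (pow_eq_zero_iff two_ne_zero |>.1 (by nlinarith [sq_nonneg ‖g z‖]))
  exact ⟨z, hz, (sub_eq_zero.1 hgz).symm⟩
end

section
/- Let K ⊆ ℝⁿ be compact, f, g : K → ℝⁿ with g continuous, g(K) convex, and f(K) ⊆ g(K). Suppose that for every sequence (xₙ) ⊆ K, convergence of (g(xₙ)) to g(x) ∈ g(K) implies convergence of (f(xₙ)) to f(x). Then there exists x₀ ∈ K with f(x₀) = g(x₀). -/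
/-!
The condition on sequences says that `f` factors as `f = φ ∘ g` on `K` with `φ` continuous on the
compact convex set `g '' K`, which `φ` maps into itself. A coincidence point of `f` and `g` is then
a `g`-preimage of a fixed point of `φ`, so the theorem is Brouwer's theorem for `g '' K`.

Brouwer's theorem is not in Mathlib; it is proved here by the analytic argument of Milnor and
Rogers. Suppose `r` is a `C¹` retraction of the closed unit ball onto the sphere, put `h = r - id`,
and consider `f_t = id + t h` on the open ball `U`. For small `t > 0` this is a bijection `U → U`
with positive Jacobian determinant, so `∫ det (1 + t h')` over `U` equals the volume of `U`. The
integral is a polynomial in `t`, so its value at `t = 1` is also the volume of `U`. But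
`1 + h' = r'` is singular, because `‖r‖ = 1`; this is a contradiction (`no_retraction`).

A `C¹` self-map `p` of the ball without fixed points would give such a retraction, sending `x` to
the point where the ray from `p x` through `x` leaves the ball (`brouwer_smooth`). Continuous maps
are approximated by smooth ones (`brouwer_ball`), and a compact convex set is reached through the
nearest-point projection (`brouwer_convex`).
-/

open Filter Topology

section Brouwer

/-! ### Convex projections and determinants -/

variable {E : Type*} [NormedAddCommGroup E] [InnerProductSpace ℝ E] [FiniteDimensional ℝ E]

/-- Nearest-point projection onto a closed convex set, together with its variational
characterization. -/
lemma exists_nonexpansive_proj {C : Set E} (hne : C.Nonempty) (hC : IsClosed C)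
    (hconv : Convex ℝ C) :
    ∃ P : E → E, (∀ x, P x ∈ C) ∧ (∀ x ∈ C, P x = x) ∧ LipschitzWith 1 P ∧
      ∀ x, ∀ w ∈ C, inner ℝ (x - P x) (w - P x) ≤ 0 := by
  choose P hPC hP using fun x => exists_norm_eq_iInf_of_complete_convex hne hC.isComplete hconv x
  have hin : ∀ x, ∀ w ∈ C, inner ℝ (x - P x) (w - P x) ≤ 0 := fun x =>
    (norm_eq_iInf_iff_real_inner_le_zero hconv (hPC x)).1 (hP x)
  refine ⟨P, hPC, fun x hx => ?_, LipschitzWith.of_dist_le_mul fun x y => ?_, hin⟩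
  · have := hin x x hx
    rw [real_inner_self_nonpos, sub_eq_zero] at this
    exact this.symm
  · have h1 := hin x (P y) (hPC y)
    have h2 := hin y (P x) (hPC x)
    have h3 : ‖P x - P y‖ ^ 2 ≤ inner ℝ (x - y) (P x - P y) := by
      rw [← real_inner_self_eq_norm_sq]
      have : inner ℝ (x - y) (P x - P y) - inner ℝ (P x - P y) (P x - P y)
          = -(inner ℝ (x - P x) (P y - P x) + inner ℝ (y - P y) (P x - P y)) := by
        simp only [inner_sub_left, inner_sub_right]; ring
      linarith
    have h4 := real_inner_le_norm (x - y) (P x - P y)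
    rw [dist_eq_norm, dist_eq_norm, NNReal.coe_one, one_mul]
    by_contra! h
    nlinarith [norm_nonneg (x - y), norm_nonneg (P x - P y)]

/-- The operators `1 + s A`, `0 ≤ s ≤ t`, are injective, so their determinant keeps the sign it has
at `s = 0`. -/
lemma det_one_add_smul_pos (A : E →L[ℝ] E) {t : ℝ} (ht : 0 ≤ t) (htA : t * ‖A‖ < 1) :
    0 < (1 + t • A).det := by
  by_contra! h
  have hcont : Continuous fun s : ℝ => (1 + s • A).det :=
    ContinuousLinearMap.continuous_det.comp (by fun_prop)
  have h0 : (1 + (0 : ℝ) • A).det = 1 := by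
    simp [ContinuousLinearMap.det]
  obtain ⟨s, hs, hs0⟩ := intermediate_value_Icc' ht hcont.continuousOn
    ⟨h, by rw [h0]; exact zero_le_one⟩
  obtain ⟨v, hv, hv0⟩ := SetLike.exists_of_lt (LinearMap.bot_lt_ker_of_det_eq_zero hs0)
  have hv1 : v + s • A v = 0 := by simpa using hv
  have hv2 : v ≠ 0 := by simpa using hv0
  have hvn : 0 < ‖v‖ := norm_pos_iff.2 hv2
  have h3 : ‖v‖ = s * ‖A v‖ := by
    rw [eq_neg_of_add_eq_zero_left hv1, norm_neg, norm_smul, Real.norm_of_nonneg hs.1,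
      ← eq_neg_of_add_eq_zero_left hv1]
  have h4 := A.le_opNorm v
  have h5 : s * ‖A v‖ ≤ s * (‖A‖ * ‖v‖) := mul_le_mul_of_nonneg_left h4 hs.1
  have h6 : s * ‖A‖ ≤ t * ‖A‖ := mul_le_mul_of_nonneg_right hs.2 (norm_nonneg _)
  nlinarith

lemma exists_poly_det (A : E →L[ℝ] E) :
    ∃ p : Polynomial ℝ, p.natDegree ≤ Module.finrank ℝ E ∧
      ∀ t : ℝ, p.eval t = (1 + t • A).det := by
  let b := Module.finBasis ℝ E
  let M := LinearMap.toMatrix b b (A : E →ₗ[ℝ] E)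
  refine ⟨_, (Polynomial.natDegree_det_X_add_C_le M 1).trans (by simp), fun t => ?_⟩
  have : (1 + t • A).det = (1 + t • M).det := by
    rw [ContinuousLinearMap.det, ← LinearMap.det_toMatrix b]
    congr 1
    simp [M]
  rw [this, ← Polynomial.coe_evalRingHom, RingHom.map_det]
  congr 1
  ext i j
  by_cases hij : i = j <;> simp [hij, add_comm, mul_comm t]

/-- Differentiating `‖r‖ ^ 2 = 1` shows that the range of the derivative is orthogonal to the nonzero
vector `r x`. -/
lemma det_eq_zero_of_norm_const {r : E → E} {x : E} (hr : DifferentiableAt ℝ r x)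
    (h : ∀ᶠ y in 𝓝 x, ‖r y‖ = 1) : (fderiv ℝ r x).det = 0 := by
  by_contra hdet
  have hd := hr.hasFDerivAt.norm_sq
  have hd' : HasFDerivAt (fun y => ‖r y‖ ^ 2) (0 : E →L[ℝ] ℝ) x := by
    refine (hasFDerivAt_const (1 : ℝ) x).congr_of_eventuallyEq ?_
    filter_upwards [h] with y hy
    simp [hy]
  have heq := hd.unique hd'
  have hu : IsUnit (fderiv ℝ r x : E →ₗ[ℝ] E) :=
    (LinearMap.isUnit_iff_isUnit_det _).2 (isUnit_iff_ne_zero.2 hdet)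
  obtain ⟨v, hv⟩ := LinearMap.range_eq_top.1 ((LinearMap.isUnit_iff_range_eq_top _).1 hu) (r x)
  have hv' : fderiv ℝ r x v = r x := hv
  have h1 := congrArg (fun L : E →L[ℝ] ℝ => L v) heq
  simp [hv', h.self_of_nhds] at h1

/-! ### The no-retraction theorem -/

/-- No `C¹` map retracts the closed unit ball onto the unit sphere. -/
lemma no_retraction [MeasurableSpace E] [BorelSpace E] (r : E → E)
    (hr : ∀ x ∈ Metric.closedBall (0 : E) 1, ContDiffAt ℝ 1 r x)
    (hr1 : ∀ x ∈ Metric.closedBall (0 : E) 1, ‖r x‖ = 1)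
    (hr2 : ∀ x : E, ‖x‖ = 1 → r x = x) : False := by
  set B := Metric.closedBall (0 : E) 1 with hB
  set U := Metric.ball (0 : E) 1 with hU
  have hUB : U ⊆ B := Metric.ball_subset_closedBall
  have hBc : IsCompact B := isCompact_closedBall 0 1
  have hBconv : Convex ℝ B := convex_closedBall 0 1
  set h : E → E := fun x => r x - x with hh
  have hh1 : ∀ x ∈ B, ContDiffAt ℝ 1 h x := fun x hx => (hr x hx).sub contDiffAt_id
  have hdc : ContinuousOn (fderiv ℝ h) B := fun x hx =>
    ((hh1 x hx).continuousAt_fderiv one_ne_zero).continuousWithinAt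
  have hdiff : ∀ x ∈ B, DifferentiableAt ℝ h x := fun x hx =>
    (hh1 x hx).differentiableAt one_ne_zero
  obtain ⟨L, hL0, hL⟩ : ∃ L : NNReal, 0 < L ∧ ∀ x ∈ B, ‖fderiv ℝ h x‖₊ ≤ L := by
    obtain ⟨c, hc⟩ := hBc.exists_bound_of_continuousOn hdc
    refine ⟨c.toNNReal + 1, by positivity, fun x hx => ?_⟩
    rw [← NNReal.coe_le_coe]
    push_cast
    have := hc x hx
    have := Real.le_coe_toNNReal c
    linarith
  have hLip : LipschitzOnWith L h B := hBconv.lipschitzOnWith_of_nnnorm_fderiv_le hdiff hL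
  obtain ⟨P, hPB, hPid, hPL, hPin⟩ := exists_nonexpansive_proj ⟨(0 : E), by simp⟩
    Metric.isClosed_closedBall hBconv
  -- the nearest point of a point outside the open ball lies on the sphere
  have hPs : ∀ x, x ∉ U → ‖P x‖ = 1 := by
    intro x hx
    have hx1 : 1 ≤ ‖x‖ := by simpa [hU] using hx
    have hP1 : ‖P x‖ ≤ 1 := by simpa [hB] using hPB x
    have h0 : (0 : ℝ) < ‖x‖ := by linarith
    have h1 := hPin x (‖x‖⁻¹ • x) (by simp [norm_smul, h0.ne'])
    have h2 := real_inner_le_norm x (P x)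
    have h3 : inner ℝ (x - P x) (‖x‖⁻¹ • x - P x)
        = ‖x‖ - inner ℝ x (P x) * (1 + ‖x‖⁻¹) + ‖P x‖ ^ 2 := by
      simp only [inner_sub_left, inner_sub_right, inner_smul_right, real_inner_self_eq_norm_sq]
      rw [real_inner_comm x (P x)]
      field_simp
      ring
    have h4 : inner ℝ x (P x) * (1 + ‖x‖⁻¹) ≤ ‖x‖ * ‖P x‖ * (1 + ‖x‖⁻¹) :=
      mul_le_mul_of_nonneg_right h2 (by positivity)
    have h5 : ‖x‖ * ‖P x‖ * (1 + ‖x‖⁻¹) = ‖x‖ * ‖P x‖ + ‖P x‖ := by field_simp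
    by_contra hne
    have : ‖P x‖ < 1 := lt_of_le_of_ne hP1 hne
    nlinarith
  -- since `h` vanishes on the sphere, `h ∘ P` extends `h` by zero to a globally Lipschitz map
  have hglob : LipschitzWith L (h ∘ P) := by
    refine LipschitzWith.of_dist_le_mul fun x y => ?_
    have h1 := hLip.dist_le_mul (P x) (hPB x) (P y) (hPB y)
    have h2 := hPL.dist_le_mul x y
    rw [NNReal.coe_one, one_mul] at h2
    exact h1.trans (mul_le_mul_of_nonneg_left h2 L.2)
  have hzero : ∀ x, x ∉ U → h (P x) = 0 := fun x hx => by
    simp [hh, hr2 _ (hPs x hx)]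
  have hvol : ∀ t : ℝ, 0 < t → t < 1 → t * L < 1 →
      ∫ x in U, (1 + t • fderiv ℝ h x).det = (MeasureTheory.volume U).toReal := by
    intro t ht ht1 htL
    -- solving `x + t h (P x) = y` is a fixed point problem for a contraction
    have hcontr : ∀ y : E, ContractingWith (t.toNNReal * L) (fun x => y - t • h (P x)) := by
      intro y
      refine ⟨?_, LipschitzWith.of_dist_le_mul fun a b => ?_⟩
      · rw [← NNReal.coe_lt_coe]
        simpa [ht.le] using htL
      · have := hglob.dist_le_mul a b
        simp only [Function.comp] at this
        rw [dist_sub_left, dist_smul₀, Real.norm_of_nonneg ht.le]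
        push_cast
        rw [Real.coe_toNNReal _ ht.le, mul_assoc]
        exact mul_le_mul_of_nonneg_left this ht.le
    have himg : (fun x => x + t • h x) '' U = U := by
      apply Set.Subset.antisymm
      · rintro _ ⟨x, hx, rfl⟩
        have hx' : ‖x‖ < 1 := by simpa [hU] using hx
        have e : x + t • h x = (1 - t) • x + t • r x := by
          simp only [hh]; module
        simp only [hU, mem_ball_zero_iff]
        rw [e]
        calc ‖(1 - t) • x + t • r x‖ ≤ ‖(1 - t) • x‖ + ‖t • r x‖ := norm_add_le _ _
          _ = (1 - t) * ‖x‖ + t := by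
            rw [norm_smul, norm_smul, hr1 x (hUB hx), Real.norm_of_nonneg ht.le,
              Real.norm_of_nonneg (by linarith), mul_one]
          _ < 1 := by nlinarith
      · intro y hy
        have hfix := (hcontr y).fixedPoint_isFixedPt
        set x := (hcontr y).fixedPoint with hx
        have hxy : y - t • h (P x) = x := hfix
        have hxU : x ∈ U := by
          by_contra hxU
          rw [hzero x hxU, smul_zero, sub_zero] at hxy
          exact hxU (hxy ▸ hy)
        rw [hPid x (hUB hxU)] at hxy
        exact ⟨x, hxU, (sub_eq_iff_eq_add.1 hxy).symm⟩
    have hinj : Set.InjOn (fun x => x + t • h x) U := by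
      intro a ha b hb hab
      have key : ∀ z ∈ U, Function.IsFixedPt
          (fun x => (a + t • h a) - t • h (P x)) z ↔ z + t • h z = a + t • h a := by
        intro z hz
        simp only [Function.IsFixedPt, hPid z (hUB hz)]
        rw [sub_eq_iff_eq_add]
        exact eq_comm
      exact (hcontr (a + t • h a)).fixedPoint_unique' ((key a ha).2 rfl) ((key b hb).2 hab.symm)
    have hder : ∀ x ∈ U, HasFDerivWithinAt (fun x => x + t • h x)
        (1 + t • fderiv ℝ h x) U x := fun x hx =>
      ((hasFDerivAt_id x).add
        ((hdiff x (hUB hx)).hasFDerivAt.const_smul t)).hasFDerivWithinAt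
    have hmain := MeasureTheory.integral_image_eq_integral_abs_det_fderiv_smul
      MeasureTheory.volume (measurableSet_ball : MeasurableSet U) hder hinj (fun _ => (1 : ℝ))
    rw [himg] at hmain
    have e1 : ∫ x in U, (1 : ℝ) = (MeasureTheory.volume U).toReal := by
      simp [MeasureTheory.Measure.real]
    rw [← e1, hmain]
    refine MeasureTheory.setIntegral_congr_fun measurableSet_ball fun x hx => ?_
    have hpos : 0 < (1 + t • fderiv ℝ h x).det := by
      refine det_one_add_smul_pos _ ht.le (lt_of_le_of_lt ?_ htL)
      exact mul_le_mul_of_nonneg_left (by exact_mod_cast hL x (hUB hx)) ht.le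
    simp [abs_of_pos hpos]
  have hint : ∀ t : ℝ, MeasureTheory.IntegrableOn
      (fun x => (1 + t • fderiv ℝ h x).det) U := by
    intro t
    refine MeasureTheory.IntegrableOn.mono_set ?_ hUB
    refine ContinuousOn.integrableOn_compact hBc ?_
    exact ContinuousLinearMap.continuous_det.comp_continuousOn
      (continuousOn_const.add (hdc.const_smul t))
  -- Lagrange interpolation at `N + 1` distinct nodes so small that `hvol` applies expresses the
  -- determinant at `t = 1` through its values at the nodes, uniformly in `x`
  set N := Module.finrank ℝ E with hN
  set c : ℝ := 1 / ((L + 1) * (N + 2)) with hc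
  let v : ℕ → ℝ := fun i => c * (i + 1)
  have hcpos : 0 < c := by positivity
  let s := Finset.range (N + 1)
  have hvinj : Set.InjOn v s := by
    intro i _ j _ hij
    have := mul_left_cancel₀ hcpos.ne' hij
    exact_mod_cast add_right_cancel this
  have hvs : ∀ i ∈ s, 0 < v i ∧ v i < 1 ∧ v i * L < 1 := by
    intro i hi
    have hi' : (i : ℝ) + 1 < N + 2 := by
      have := Finset.mem_range.1 hi
      have : (i : ℝ) < N + 1 := by exact_mod_cast this
      linarith
    have h1 : v i < 1 / (L + 1) := by
      have : c * (N + 2) = 1 / ((L : ℝ) + 1) := by rw [hc]; field_simp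
      rw [← this]
      exact mul_lt_mul_of_pos_left hi' hcpos
    have hLp : (0 : ℝ) < L := hL0
    have h2 : v i * (L + 1) < 1 := (lt_div_iff₀ (by positivity)).1 h1
    have h3 : 0 < v i := by positivity
    refine ⟨h3, ?_, ?_⟩ <;> nlinarith
  have hinterp : ∀ x, (1 + (1 : ℝ) • fderiv ℝ h x).det
      = ∑ i ∈ s, (Lagrange.basis s v i).eval 1 * (1 + v i • fderiv ℝ h x).det := by
    intro x
    obtain ⟨p, hp, hpe⟩ := exists_poly_det (fderiv ℝ h x)
    have hdeg : p.degree < s.card := by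
      refine (Polynomial.degree_le_of_natDegree_le hp).trans_lt ?_
      simp only [s, Finset.card_range]
      exact_mod_cast Nat.lt_succ_self N
    have := congrArg (Polynomial.eval 1) (Lagrange.eq_interpolate hvinj hdeg)
    rw [hpe, Lagrange.interpolate_apply, Polynomial.eval_finsetSum] at this
    rw [this]
    refine Finset.sum_congr rfl fun i _ => ?_
    simp [hpe, mul_comm]
  have hsum : ∑ i ∈ s, (Lagrange.basis s v i).eval 1 = 1 := by
    rw [← Polynomial.eval_finsetSum, Lagrange.sum_basis hvinj ⟨0, by simp [s]⟩,
      Polynomial.eval_one]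
  have hone : ∫ x in U, (1 + (1 : ℝ) • fderiv ℝ h x).det
      = (MeasureTheory.volume U).toReal := by
    simp_rw [hinterp]
    rw [MeasureTheory.integral_finsetSum _ fun i _ => (hint (v i)).const_mul _]
    simp_rw [MeasureTheory.integral_const_mul]
    rw [Finset.sum_congr rfl fun i hi => by
      rw [hvol (v i) (hvs i hi).1 (hvs i hi).2.1 (hvs i hi).2.2], ← Finset.sum_mul, hsum, one_mul]
  have hsing : ∫ x in U, (1 + (1 : ℝ) • fderiv ℝ h x).det = 0 := by
    rw [MeasureTheory.setIntegral_congr_fun (g := fun _ => (0 : ℝ)) measurableSet_ball]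
    · simp
    intro x hx
    have hrd : DifferentiableAt ℝ r x := (hr x (hUB hx)).differentiableAt one_ne_zero
    have e : 1 + (1 : ℝ) • fderiv ℝ h x = fderiv ℝ r x := by
      rw [hh, fderiv_fun_sub hrd differentiableAt_fun_id, fderiv_fun_id, one_smul]
      exact add_sub_cancel _ _
    simp only []
    rw [e]
    refine det_eq_zero_of_norm_const hrd ?_
    filter_upwards [Metric.isOpen_ball.mem_nhds hx] with y hy using hr1 y (hUB hy)
  have hpos : 0 < (MeasureTheory.volume U).toReal :=
    ENNReal.toReal_pos (Metric.measure_ball_pos _ _ one_pos).ne' MeasureTheory.measure_ball_lt_top.ne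
  linarith

/-! ### Brouwer's fixed point theorem -/

/-- Brouwer's theorem for `C¹` maps. The map is defined on all of `E`, so that the retraction built
from it is `C¹` at the boundary points of the ball too. -/
lemma brouwer_smooth [MeasurableSpace E] [BorelSpace E] (p : E → E) (hp : ContDiff ℝ 1 p)
    (hp1 : ∀ x, ‖p x‖ ≤ 1) : ∃ x ∈ Metric.closedBall (0 : E) 1, p x = x := by
  by_contra! hne
  let u : E → E := fun x => x - p x
  have hu : ContDiff ℝ 1 u := contDiff_id.sub hp
  let a : E → ℝ := fun x => ‖u x‖ ^ 2
  let b : E → ℝ := fun x => inner ℝ x (u x)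
  let D : E → ℝ := fun x => b x ^ 2 + a x * (1 - ‖x‖ ^ 2)
  have ha : ContDiff ℝ 1 a := hu.norm_sq ℝ
  have hb : ContDiff ℝ 1 b := contDiff_id.inner ℝ hu
  have hD : ContDiff ℝ 1 D :=
    (hb.pow 2).add (ha.mul (contDiff_const.sub (contDiff_id.norm_sq ℝ)))
  have hapos : ∀ x ∈ Metric.closedBall (0 : E) 1, 0 < a x := fun x hx => by
    have : u x ≠ 0 := sub_ne_zero.2 (hne x hx).symm
    positivity
  have hbpos : ∀ x : E, ‖x‖ = 1 → 0 < b x := fun x hx => by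
    have h1 := hapos x (by simp [hx])
    have h2 : a x = ‖x‖ ^ 2 - 2 * inner ℝ x (p x) + ‖p x‖ ^ 2 := norm_sub_sq_real x (p x)
    have h3 : b x = ‖x‖ ^ 2 - inner ℝ x (p x) := by
      simp only [b, u, inner_sub_right, real_inner_self_eq_norm_sq]
    have h4 := hp1 x
    have h5 := norm_nonneg (p x)
    rw [hx] at h2 h3
    nlinarith
  have hDpos : ∀ x ∈ Metric.closedBall (0 : E) 1, 0 < D x := fun x hx => by
    have hx1 : ‖x‖ ≤ 1 := by simpa using hx
    have h1 := hapos x hx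
    rcases hx1.lt_or_eq with h | h
    · have : 0 < 1 - ‖x‖ ^ 2 := by nlinarith [norm_nonneg x]
      simp only [D]
      positivity
    · have := hbpos x h
      simp only [D, h]
      norm_num
      positivity
  -- the coefficient of `u x` is the larger root `l` of `‖x + l u‖² = a l² + 2 b l + ‖x‖² = 1`
  refine no_retraction (fun x => x + ((-b x + √(D x)) / a x) • u x) (fun x hx => ?_)
    (fun x hx => ?_) (fun x hx => ?_)
  · exact contDiffAt_id.add (((hb.contDiffAt.neg.add
      (hD.contDiffAt.sqrt (hDpos x hx).ne')).div ha.contDiffAt (hapos x hx).ne').smul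
        hu.contDiffAt)
  · have h1 := hapos x hx
    have h2 := Real.sq_sqrt (hDpos x hx).le
    set l := (-b x + √(D x)) / a x with hl
    have h3 : a x * l = -b x + √(D x) := by rw [hl]; field_simp
    have h4 : ‖x + l • u x‖ ^ 2 = ‖x‖ ^ 2 + 2 * l * b x + l ^ 2 * a x := by
      rw [norm_add_sq_real, norm_smul, inner_smul_right, mul_pow, Real.norm_eq_abs, sq_abs]
      ring
    have h5 : a x * (‖x‖ ^ 2 + 2 * l * b x + l ^ 2 * a x) = a x * 1 := by
      have : (a x * l + b x) ^ 2 = D x := by rw [h3, neg_add_cancel_comm, h2]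
      simp only [D] at this
      linarith
    have h6 : ‖x + l • u x‖ ^ 2 = 1 := h4.trans (mul_left_cancel₀ h1.ne' h5)
    exact (pow_eq_one_iff_of_nonneg (norm_nonneg _) two_ne_zero).1 h6
  · have h1 := hbpos x hx
    have : √(D x) = b x := by
      rw [show D x = b x ^ 2 by simp [D, hx], Real.sqrt_sq h1.le]
    simp [this]

open scoped Manifold ContDiff in
/-- Brouwer's theorem for continuous maps into the closed unit ball. The displacement `‖F x - x‖` is
bounded away from zero on the ball if `F` has no fixed point there, so a closer smooth approximation
with values in the ball has none either. -/
lemma brouwer_ball [MeasurableSpace E] [BorelSpace E] (F : E → E) (hF : Continuous F)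
    (hF1 : ∀ x, ‖F x‖ ≤ 1) : ∃ x, F x = x := by
  by_contra! hne
  obtain ⟨x₀, hx₀, hmin⟩ := (isCompact_closedBall (0 : E) 1).exists_isMinOn
    ⟨0, by simp⟩ (f := fun x => ‖F x - x‖) (by fun_prop)
  have hε : 0 < ‖F x₀ - x₀‖ := norm_pos_iff.2 (sub_ne_zero.2 (hne x₀))
  obtain ⟨p, hp⟩ := exists_contMDiffMap_forall_mem_convex_of_local_const (n := 1) 𝓘(ℝ, E)
    (t := fun x => Metric.closedBall (0 : E) 1 ∩ Metric.ball (F x) ‖F x₀ - x₀‖)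
    (fun x => (convex_closedBall 0 1).inter (convex_ball _ _))
    (fun x => ⟨F x, by
      filter_upwards [hF.continuousAt.eventually (Metric.ball_mem_nhds (F x) hε)] with y hy
      exact ⟨by simpa using hF1 x, Metric.mem_ball_comm.1 hy⟩⟩)
  obtain ⟨x, hx, hpx⟩ := brouwer_smooth p p.contMDiff.contDiff
    fun x => by simpa using (hp x).1
  have h1 := (hp x).2
  rw [hpx, Metric.mem_ball, dist_comm, dist_eq_norm] at h1
  exact absurd (hmin hx) (not_le.2 h1)

/-- Brouwer's theorem for compact convex sets: a fixed point of `φ ∘ P`, where `P` is the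
nearest-point projection onto `C`, lies in `C`. -/
lemma brouwer_convex [MeasurableSpace E] [BorelSpace E] {C : Set E} (hne : C.Nonempty)
    (hC : IsCompact C) (hconv : Convex ℝ C) (φ : E → E) (hφ : ContinuousOn φ C)
    (hmap : Set.MapsTo φ C C) : ∃ y ∈ C, φ y = y := by
  obtain ⟨P, hPC, hPid, hPL, -⟩ := exists_nonexpansive_proj hne hC.isClosed hconv
  obtain ⟨R, hR, hCR⟩ := hC.isBounded.exists_pos_norm_le
  obtain ⟨x, hx⟩ := brouwer_ball (fun x => R⁻¹ • φ (P (R • x)))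
    ((hφ.comp_continuous (hPL.continuous.comp (by fun_prop)) fun _ => hPC _).const_smul _)
    (fun x => by
      rw [norm_smul, norm_inv, Real.norm_of_nonneg hR.le, inv_mul_le_one₀ hR]
      exact hCR _ (hmap (hPC _)))
  have h1 : φ (P (R • x)) = R • x := by
    rw [← inv_smul_eq_iff₀ hR.ne']; exact hx
  have h2 : R • x ∈ C := h1 ▸ hmap (hPC _)
  exact ⟨R • x, h2, by rwa [hPid _ h2] at h1⟩

end Brouwer

/-! ### Coincidence points -/

theorem stmt11 {n : ℕ} (K : Set (EuclideanSpace ℝ (Fin n))) (hne : K.Nonempty)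
    (hK : IsCompact K)
    (f g : EuclideanSpace ℝ (Fin n) → EuclideanSpace ℝ (Fin n))
    (hg : ContinuousOn g K) (hconv : Convex ℝ (g '' K)) (hfg : f '' K ⊆ g '' K)
    (hseq : ∀ (u : ℕ → EuclideanSpace ℝ (Fin n)) (x : EuclideanSpace ℝ (Fin n)),
      (∀ m, u m ∈ K) → x ∈ K →
      Filter.Tendsto (fun m => g (u m)) Filter.atTop (nhds (g x)) →
      Filter.Tendsto (fun m => f (u m)) Filter.atTop (nhds (f x))) :
    ∃ x₀ ∈ K, f x₀ = g x₀ := by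
  -- `σ` picks a preimage under `g`; `hseq` says exactly that `f ∘ σ` is continuous on `g '' K`
  choose! σ hσK hσ using fun y (hy : y ∈ g '' K) => hy
  have hcont : ContinuousOn (f ∘ σ) (g '' K) := by
    refine continuousOn_iff_continuous_domRestrict.2 (SeqContinuous.continuous ?_)
    intro y z hyz
    refine hseq (fun m => σ (y m)) (σ z) (fun m => hσK _ (y m).2) (hσK _ z.2) ?_
    simp only [hσ _ (y _).2, hσ _ z.2]
    exact (continuous_subtype_val.tendsto z).comp hyz
  obtain ⟨y, hy, hfix⟩ := brouwer_convex (hne.image g) (hK.image_of_continuousOn hg) hconv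
    (f ∘ σ) hcont fun y hy => hfg ⟨_, hσK y hy, rfl⟩
  exact ⟨σ y, hσK y hy, hfix.trans (hσ y hy).symm⟩
end
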